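/- Suppose P(x,y) = A·x(x−1)/2 + B·xy + C·y(y−1)/2 + D·x + E·y + F with A,B,C,D,E,F ∈ ℤ is a quadratic packing polynomial on the sector S(α) for some α > 0. Then the discriminant of P vanishes: B² = AC. -/

import Mathlib

/-!
Write `Q` for the quadratic part of `P`, let `q(s) = Q(1, s)` (`slopeForm`), and suppose that the
discriminant is nonzero.

Since `P ≥ 0` on the lattice points of the sector, `q ≥ 0` on `[0, α]`. The form cannot vanish
inside the sector, for such a zero would be double (`interior_zero`). Nor can it vanish on a
bounding ray: `P` would then grow so slowly on the lines of lattice points along that ray that, by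
divergence of the harmonic series, it would take more than `N + 1` values in `[0, N]`
(`boundary_zero_false`). So `q` is bounded below by a positive constant, and the set
`S = {P ≤ n²}` of lattice points of the sector, which has exactly `n² + 1` elements, lies in a box
of side `O(n)` (`box_bound`).

As `P` is quadratic in each variable, a unit step moves only `O(1)` points of each row or column out
of `S`, hence `O(n)` points in all. Therefore `S` is equidistributed modulo any fixed prime `p`
(`residue_average`), and the proportion of the values of `P` on `S` that are congruent to `c` tends
to `Z / p²`, where `Z` is the number of solutions of `P ≡ c` in `(ℤ/p)²`. But `P` maps `S`
bijectively onto `{0, …, n²}`, so the proportion tends to `1 / p`, and `Z = p`.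

If `p` is odd and does not divide the discriminant, `P` has a critical point modulo `p`, and the
point reflection in it preserves `P`. For every `c` other than the critical value, `Z` is then even
(`exists_even_fiber`), whereas `p` is odd.
-/

/-! ### The divergence argument -/

/-- The lattice points of the sector `S(α)`, with integer coordinates. -/
def coneSector (α : ℝ) : Set (ℤ × ℤ) := {z | 0 ≤ z.2 ∧ (z.2 : ℝ) ≤ α * z.1}

/-- An injective, nonnegative `p` cannot grow as slowly as `M (k + 1) x` along a doubly indexed family
`f k x` (with `x ≥ X k`) of distinct points: the number of values `≤ N` would be at least
`(N / M) ∑_{k < K} 1 / (k + 1) - O_K(1)`, and the harmonic series diverges. -/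
theorem harmonic_false {T : Set (ℤ × ℤ)} {p : ℤ × ℤ → ℤ} (hinj : Set.InjOn p T)
    (hnn : ∀ z ∈ T, 0 ≤ p z) (M : ℕ) (hM : 0 < M) (X : ℕ → ℕ) (f : ℕ → ℕ → ℤ × ℤ)
    (hT : ∀ k x, X k ≤ x → f k x ∈ T)
    (hle : ∀ k x, X k ≤ x → p (f k x) ≤ M * (k + 1) * x)
    (finj : ∀ k x k' x', f k x = f k' x' → k = k' ∧ x = x') : False := by
  obtain ⟨K, hK⟩ := (Real.tendsto_sum_range_one_div_nat_succ_atTop.eventually_ge_atTop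
    (2 * (M : ℝ))).exists
  have count : ∀ N : ℕ, ∑ k ∈ Finset.range K, (N / (M * (k + 1)) + 1 - X k) ≤ N + 1 := by
    intro N
    have := Finset.card_le_card_of_injOn
      (s := (Finset.range K).sigma fun k => Finset.Ico (X k) (N / (M * (k + 1)) + 1))
      (t := Finset.range (N + 1)) (fun a => (p (f a.1 a.2)).toNat) ?_ ?_
    · simpa [Finset.card_sigma] using this
    · rintro ⟨k, x⟩ h
      simp only [Finset.coe_sigma, Set.mem_sigma_iff, Finset.coe_range, Set.mem_Iio,
        Finset.coe_Ico, Set.mem_Ico] at h ⊢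
      have h1 : M * (k + 1) * x ≤ N := by
        rw [mul_comm]
        exact (Nat.le_div_iff_mul_le (by positivity)).1 (by omega)
      have h2 := hle k x h.2.1
      have h3 : ((M * (k + 1) * x : ℕ) : ℤ) ≤ N := by exact_mod_cast h1
      push_cast at h3
      omega
    · rintro ⟨k, x⟩ h ⟨k', x'⟩ h' e
      simp only [Finset.coe_sigma, Set.mem_sigma_iff, Finset.coe_range, Set.mem_Iio,
        Finset.coe_Ico, Set.mem_Ico] at h h' e
      have a1 := hnn _ (hT k x h.2.1)
      have a2 := hnn _ (hT k' x' h'.2.1)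
      obtain ⟨rfl, rfl⟩ := finj _ _ _ _
        (hinj (hT k x h.2.1) (hT k' x' h'.2.1) (by omega))
      rfl
  set Y := ∑ k ∈ Finset.range K, X k with hY
  have h := count (Y + 2)
  have h1 : ∑ k ∈ Finset.range K, (((Y + 2 : ℕ) : ℝ) / (M * (k + 1)) - X k) ≤ (Y + 2 : ℕ) + 1 := by
    have h' : ∑ k ∈ Finset.range K, (((Y + 2) / (M * (k + 1)) + 1 - X k : ℕ) : ℝ)
        ≤ (Y + 2 : ℕ) + 1 := by exact_mod_cast h
    refine le_trans (Finset.sum_le_sum fun k _ => ?_) h'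
    have := Nat.lt_div_mul_add (a := Y + 2) (b := M * (k + 1)) (by positivity)
    have h2 : ((Y + 2 : ℕ) : ℝ) / (M * (k + 1)) ≤ (((Y + 2) / (M * (k + 1)) : ℕ) : ℝ) + 1 := by
      rw [div_le_iff₀ (by positivity)]
      have : ((Y + 2 : ℕ) : ℝ) ≤ (((Y + 2) / (M * (k + 1)) * (M * (k + 1)) + M * (k + 1) : ℕ) : ℝ) := by
        exact_mod_cast this.le
      push_cast at this ⊢
      linarith
    have h3 : (((Y + 2) / (M * (k + 1)) + 1 : ℕ) : ℝ) ≤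
        (((Y + 2) / (M * (k + 1)) + 1 - X k : ℕ) : ℝ) + X k := by
      norm_cast; omega
    push_cast at h2 h3 ⊢
    linarith
  have h4 : ∑ k ∈ Finset.range K, (((Y + 2 : ℕ) : ℝ) / (M * (k + 1)) - X k)
      = ((Y + 2 : ℕ) : ℝ) / M * (∑ k ∈ Finset.range K, 1 / ((k : ℝ) + 1)) - Y := by
    rw [Finset.sum_sub_distrib, Finset.mul_sum, hY]
    push_cast
    congr 1
    refine Finset.sum_congr rfl fun k _ => ?_
    have : (M : ℝ) ≠ 0 := by positivity
    have : (k : ℝ) + 1 ≠ 0 := by positivity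
    field_simp
  have hM' : (0 : ℝ) < M := by exact_mod_cast hM
  have h5 : ((Y + 2 : ℕ) : ℝ) / M * (2 * M) ≤
      ((Y + 2 : ℕ) : ℝ) / M * (∑ k ∈ Finset.range K, 1 / ((k : ℝ) + 1)) := by gcongr
  have h6 : ((Y + 2 : ℕ) : ℝ) / M * (2 * M) = 2 * (Y + 2 : ℕ) := by field_simp
  push_cast at *
  linarith

/-! ### Sums over translates of finite sets -/

/-- Translating `S` by `e` changes a sum of values in `[0, 1]` by at most the number of points of `S`
that leave `S`. -/
theorem shift_sum_le (S : Finset (ℤ × ℤ)) (e : ℤ × ℤ) (g : ℤ × ℤ → ℝ)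
    (g0 : ∀ z, 0 ≤ g z) (g1 : ∀ z, g z ≤ 1) :
    |∑ z ∈ S, g (z + e) - ∑ z ∈ S, g z| ≤ (S.filter fun z => z + e ∉ S).card := by
  set S' := S.map (addRightEmbedding e) with hS'
  have h1 : ∑ z ∈ S, g (z + e) = ∑ z ∈ S', g z := by simp [hS']
  have h2 : (S.filter fun z => z + e ∉ S).card = (S' \ S).card := by
    rw [← Finset.card_map (addRightEmbedding e)]
    congr 1
    ext z
    simp only [hS', Finset.mem_map, Finset.mem_filter, Finset.mem_sdiff, addRightEmbedding_apply]
    constructor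
    · rintro ⟨a, ⟨h, h'⟩, rfl⟩; exact ⟨⟨a, h, rfl⟩, h'⟩
    · rintro ⟨⟨a, h, rfl⟩, h'⟩; exact ⟨a, ⟨h, h'⟩, rfl⟩
  have h3 : (S \ S').card = (S' \ S).card :=
    Finset.card_sdiff_comm (by simp [hS'])
  have b : ∀ U : Finset (ℤ × ℤ), 0 ≤ ∑ z ∈ U, g z ∧ ∑ z ∈ U, g z ≤ U.card := fun U =>
    ⟨Finset.sum_nonneg fun z _ => g0 z, by
      simpa using Finset.sum_le_sum (s := U) fun z _ => g1 z⟩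
  have b1 := b (S' \ S)
  have b2 := b (S \ S')
  rw [h3] at b2
  rw [h1, h2, ← Finset.sum_sdiff_sub_sum_sdiff, abs_le]
  constructor <;> linarith

/-- A polynomial of degree at most two crosses a level upwards in at most one integer step, whatever
the sign of its leading coefficient. -/
theorem crossing_unique {h : ℝ → ℝ} {a b c N : ℝ} (hh : ∀ x, h x = a * x ^ 2 + b * x + c)
    {x x' : ℤ} (h1 : h x ≤ N) (h2 : N < h (x + 1)) (h3 : h x' ≤ N) (h4 : N < h (x' + 1)) :
    x = x' := by
  have key : ∀ x x' : ℤ, h x ≤ N → N < h (x + 1) → h x' ≤ N → N < h (x' + 1) → ¬ x < x' := by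
    intro x x' h1 h2 h3 h4 hlt
    have hd : (1 : ℝ) ≤ x' - x := by
      have : x + 1 ≤ x' := hlt
      have : ((x + 1 : ℤ) : ℝ) ≤ x' := by exact_mod_cast this
      push_cast at this; linarith
    -- Interpolation at `x, x+1, x'` forces `a < 0`; at `x+1, x', x'+1` it forces `a > 0`.
    obtain ⟨d, hd'⟩ : ∃ d : ℝ, (x' : ℝ) = x + 1 + d := ⟨x' - x - 1, by ring⟩
    have d0 : 0 ≤ d := by linarith
    have e1 : h (x + 1) * (d + 1) = h x * d + h x' - a * d * (d + 1) := by
      simp only [hh, hd']; ring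
    have e2 : h x' * (d + 1) = h (x + 1) + h (x' + 1) * d - a * d * (d + 1) := by
      simp only [hh, hd']; ring
    nlinarith [mul_le_mul_of_nonneg_right h1 d0, mul_le_mul_of_nonneg_right h4.le d0,
      mul_lt_mul_of_pos_right h2 (by linarith : 0 < d + 1),
      mul_le_mul_of_nonneg_right h3 (by linarith : 0 ≤ d + 1)]
  rcases lt_trichotomy x x' with h | h | h
  · exact (key _ _ h1 h2 h3 h4 h).elim
  · exact h
  · exact (key _ _ h3 h4 h1 h2 h).elim

theorem shift_sum_le_two (S : Finset (ℤ × ℤ)) (W : ℝ)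
    (hr : ((S.filter fun z => z + (1, 0) ∉ S).card : ℝ) ≤ W)
    (hc : ((S.filter fun z => z + (0, 1) ∉ S).card : ℝ) ≤ W) (i j : ℕ) (g : ℤ × ℤ → ℝ)
    (g0 : ∀ z, 0 ≤ g z) (g1 : ∀ z, g z ≤ 1) :
    |∑ z ∈ S, g (z + ((i : ℤ), (j : ℤ))) - ∑ z ∈ S, g z| ≤ (i + j) * W := by
  induction i with
  | zero =>
    induction j with
    | zero => 
      have : ((0 : ℤ), (0 : ℤ)) = 0 := rfl
      simp [this]
    | succ j ih =>
      have := (shift_sum_le S (0, 1) (fun z => g (z + (((0 : ℕ) : ℤ), (j : ℤ))))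
        (fun _ => g0 _) (fun _ => g1 _)).trans hc
      have e : ∀ z : ℤ × ℤ, z + (0, 1) + (((0 : ℕ) : ℤ), (j : ℤ))
          = z + (((0 : ℕ) : ℤ), ((j + 1 : ℕ) : ℤ)) := by
        intro z; ext <;> simp; ring
      simp only [e] at this
      refine (abs_sub_le _ _ _).trans ((add_le_add this ih).trans ?_)
      push_cast; linarith
  | succ i ih =>
    have := (shift_sum_le S (1, 0) (fun z => g (z + ((i : ℤ), (j : ℤ))))
      (fun _ => g0 _) (fun _ => g1 _)).trans hr
    have e : ∀ z : ℤ × ℤ, z + (1, 0) + ((i : ℤ), (j : ℤ))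
        = z + (((i + 1 : ℕ) : ℤ), (j : ℤ)) := by
      intro z; ext <;> simp; ring
    simp only [e] at this
    refine (abs_sub_le _ _ _).trans ((add_le_add this ih).trans ?_)
    push_cast; linarith

/-- Equidistribution modulo `p`: if few points of `S` leave `S` under the two unit steps, the average of
`φ` over the residue classes of the points of `S` is close to its average over `(ℤ/p)²`. -/
theorem residue_average (p : ℕ) [Fact p.Prime] (S : Finset (ℤ × ℤ)) (W : ℝ) (hW : 0 ≤ W)
    (hr : ((S.filter fun z => z + (1, 0) ∉ S).card : ℝ) ≤ W)
    (hc : ((S.filter fun z => z + (0, 1) ∉ S).card : ℝ) ≤ W) (φ : ZMod p × ZMod p → ℝ)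
    (g0 : ∀ z, 0 ≤ φ z) (g1 : ∀ z, φ z ≤ 1) :
    |S.card * ∑ v, φ v - p ^ 2 * ∑ z ∈ S, φ (z.1, z.2)| ≤ p ^ 2 * (2 * p * W) := by
  -- Both terms are sums over all shifts `v` in `[0, p)²`, compared shift by shift.
  have e1 : (S.card : ℝ) * ∑ v, φ v
      = ∑ v : ZMod p × ZMod p, ∑ z ∈ S, φ (((z + ((v.1.val : ℤ), (v.2.val : ℤ))).1 : ℤ),
          ((z + ((v.1.val : ℤ), (v.2.val : ℤ))).2 : ℤ)) := by
    rw [Finset.sum_comm, ← nsmul_eq_mul, ← Finset.sum_const]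
    refine Finset.sum_congr rfl fun z _ => ?_
    rw [← Equiv.sum_comp (Equiv.addLeft ((z.1 : ZMod p), (z.2 : ZMod p)))]
    simp
    rfl
  have e2 : (p : ℝ) ^ 2 * ∑ z ∈ S, φ (z.1, z.2)
      = ∑ v : ZMod p × ZMod p, ∑ z ∈ S, φ (z.1, z.2) := by
    simp [ZMod.card, sq]
  rw [e1, e2, ← Finset.sum_sub_distrib]
  refine (Finset.abs_sum_le_sum_abs _ _).trans ?_
  have : ∑ _v : ZMod p × ZMod p, 2 * (p : ℝ) * W = p ^ 2 * (2 * p * W) := by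
    simp [ZMod.card, sq]
  rw [← this]
  refine Finset.sum_le_sum fun v _ => ?_
  refine (shift_sum_le_two S W hr hc v.1.val v.2.val (fun z => φ (z.1, z.2))
    (fun _ => g0 _) (fun _ => g1 _)).trans ?_
  have h1 : (v.1.val : ℝ) ≤ p := by exact_mod_cast (ZMod.val_lt v.1).le
  have h2 : (v.2.val : ℝ) ≤ p := by exact_mod_cast (ZMod.val_lt v.2).le
  gcongr; linarith

theorem count_residue (p : ℕ) [Fact p.Prime] (c : ZMod p) (n : ℕ) :
    |(n : ℝ) - p * ∑ k ∈ Finset.range n, (if (k : ZMod p) = c then (1 : ℝ) else 0)| ≤ p := by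
  have hp : 0 < p := (Fact.out : p.Prime).pos
  have h := Nat.count_modEq_card n hp c.val
  have e : ∑ k ∈ Finset.range n, (if (k : ZMod p) = c then (1 : ℝ) else 0)
      = (n.count (· ≡ c.val [MOD p]) : ℕ) := by
    rw [Finset.sum_boole, Nat.count_eq_card_filter_range]
    congr 2
    ext k
    simp [← ZMod.natCast_eq_natCast_iff]
  have hd := Nat.div_add_mod n p
  have hm := Nat.mod_lt n hp
  have hd' : (p : ℝ) * (n / p : ℕ) + (n % p : ℕ) = n := by exact_mod_cast hd
  have hm' : ((n % p : ℕ) : ℝ) < p := by exact_mod_cast hm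
  have hm0 : (0 : ℝ) ≤ ((n % p : ℕ) : ℝ) := by positivity
  rw [e, h, abs_le]
  split_ifs <;> push_cast <;> constructor <;> nlinarith

/-! ### The polynomial near a ray -/

/-- The quadratic polynomial, as a function of real variables. -/
noncomputable def quadPoly (A B C D E F : ℤ) (x y : ℝ) : ℝ :=
  (A : ℝ) * (x * (x - 1) / 2) + (B : ℝ) * (x * y) + (C : ℝ) * (y * (y - 1) / 2)
    + (D : ℝ) * x + (E : ℝ) * y + (F : ℝ)

/-- The same polynomial on `ℤ²`; the integer divisions by `2` are exact. -/
def intPoly (A B C D E F : ℤ) (z : ℤ × ℤ) : ℤ :=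
  A * (z.1 * (z.1 - 1) / 2) + B * (z.1 * z.2) + C * (z.2 * (z.2 - 1) / 2) + D * z.1 + E * z.2 + F

/-- The leading form on the ray of slope `s`: the quadratic part of `quadPoly` at `(1, s)`. -/
noncomputable def slopeForm (A B C : ℤ) (s : ℝ) : ℝ := A / 2 + B * s + C * s ^ 2 / 2

theorem two_mul_half (x : ℤ) : 2 * (x * (x - 1) / 2) = x * (x - 1) := by
  have h : Even (x * (x - 1)) := by
    have := Int.even_mul_succ_self (x - 1)
    rwa [sub_add_cancel, mul_comm] at this
  exact Int.mul_ediv_cancel' h.two_dvd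

theorem intPoly_cast (A B C D E F : ℤ) (z : ℤ × ℤ) :
    (intPoly A B C D E F z : ℝ) = quadPoly A B C D E F z.1 z.2 := by
  have h : ∀ x : ℤ, ((x * (x - 1) / 2 : ℤ) : ℝ) = (x : ℝ) * (x - 1) / 2 := by
    intro x
    have : ((2 * (x * (x - 1) / 2) : ℤ) : ℝ) = ((x * (x - 1) : ℤ) : ℝ) := by rw [two_mul_half]
    push_cast only [Int.cast_mul, Int.cast_sub, Int.cast_ofNat, Int.cast_one] at this
    linarith
  simp only [intPoly, quadPoly, Int.cast_add, Int.cast_mul, h]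

/-- Within distance `t ≤ x` of the ray of slope `s ∈ [0, α]`, the polynomial differs from its leading
term by `O(t x)`, uniformly in `s`. -/
theorem near_ray (A B C D E F : ℤ) (α : ℝ) :
    ∃ M : ℕ, 0 < M ∧ ∀ s t x y : ℝ, 0 ≤ s → s ≤ α → 1 ≤ t → t ≤ x → |y - s * x| ≤ t →
      |quadPoly A B C D E F x y - slopeForm A B C s * x ^ 2| ≤ M * t * x := by
  obtain ⟨M, hM⟩ := exists_nat_ge ((|(B : ℝ)| + |(C : ℝ)| * α) + |(C : ℝ) / 2| +
    (|(D : ℝ) - A / 2| + |(E : ℝ) - C / 2| * α) + |(E : ℝ) - C / 2| + |(F : ℝ)|)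
  refine ⟨M + 1, by omega, fun s t x y s0 sα t1 tx hy => ?_⟩
  obtain ⟨θ, hθ⟩ : ∃ θ, y = s * x + θ := ⟨y - s * x, by ring⟩
  have hθt : |θ| ≤ t := by simpa [hθ] using hy
  have x1 : 1 ≤ x := t1.trans tx
  have e : quadPoly A B C D E F x y - slopeForm A B C s * x ^ 2 =
      (B + C * s) * (θ * x) + (C / 2 : ℝ) * θ ^ 2 + ((D - A / 2) + (E - C / 2) * s) * x
        + (E - C / 2) * θ + F * 1 := by
    simp only [quadPoly, slopeForm, hθ]; ring
  have term : ∀ u w a : ℝ, |u| ≤ a → |w| ≤ t * x → |u * w| ≤ a * (t * x) := by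
    intro u w a hu hw
    rw [abs_mul]
    exact mul_le_mul hu hw (abs_nonneg _) ((abs_nonneg _).trans hu)
  have ax : |x| = x := abs_of_pos (by linarith)
  have as : |s| ≤ α := by rwa [abs_of_nonneg s0]
  have lin : ∀ u v : ℝ, |u + v * s| ≤ |u| + |v| * α := by
    intro u v
    refine (abs_add_le _ _).trans ?_
    rw [abs_mul]
    gcongr
  have xt : x ≤ t * x := by nlinarith
  have h1 := term _ (θ * x) _ (lin B C) (by rw [abs_mul, ax]; gcongr)
  have h2 := term (C / 2 : ℝ) (θ ^ 2) _ le_rfl (by rw [abs_pow, sq]; gcongr; linarith)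
  have h3 := term _ x _ (lin (D - A / 2) (E - C / 2)) (by rwa [ax])
  have h4 := term (E - C / 2 : ℝ) θ _ le_rfl (by linarith)
  have h5 := term (F : ℝ) 1 _ le_rfl (by rw [abs_one]; linarith)
  rw [e]
  have tx0 : 0 ≤ t * x := by linarith
  have h6 := mul_le_mul_of_nonneg_right hM tx0
  refine (abs_add_le _ _).trans ?_
  refine (add_le_add (abs_add_le _ _) le_rfl).trans ?_
  refine (add_le_add (add_le_add (abs_add_le _ _) le_rfl) le_rfl).trans ?_
  refine (add_le_add (add_le_add (add_le_add (abs_add_le _ _) le_rfl) le_rfl) le_rfl).trans ?_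
  push_cast
  linarith

section
variable {A B C D E F : ℤ} {α : ℝ}

theorem slopeForm_nonneg (hnn : ∀ z ∈ coneSector α, 0 ≤ intPoly A B C D E F z)
    {s : ℝ} (s0 : 0 ≤ s) (sα : s ≤ α) : 0 ≤ slopeForm A B C s := by
  obtain ⟨M, -, h⟩ := near_ray A B C D E F α
  by_contra! hneg
  obtain ⟨n, hn⟩ := exists_nat_gt ((M : ℝ) / (-slopeForm A B C s))
  rw [div_lt_iff₀ (by linarith)] at hn
  have hn1 : 1 ≤ n := by
    rcases Nat.eq_zero_or_pos n with rfl | h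
    · have : (0 : ℝ) ≤ M := by positivity
      simp at hn; linarith
    · exact h
  have hn1' : (1 : ℝ) ≤ n := by exact_mod_cast hn1
  have f1 := Int.floor_le (s * n)
  have f2 := Int.lt_floor_add_one (s * n)
  have h1 := h s 1 n ⌊s * n⌋ s0 sα le_rfl hn1' (abs_le.2 ⟨by linarith, by linarith⟩)
  have h2 := hnn ((n : ℤ), ⌊s * n⌋) ⟨Int.floor_nonneg.2 (by positivity), by
    push_cast
    exact f1.trans (by gcongr)⟩
  have h3 : (0 : ℝ) ≤ intPoly A B C D E F ((n : ℤ), ⌊s * n⌋) := by exact_mod_cast h2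
  rw [intPoly_cast] at h3
  push_cast at h3
  have h4 := (abs_le.1 h1).2
  nlinarith

/-- If the leading form vanished on a bounding ray, the `k`-th parallel line of lattice points inwards
from that ray would carry values `O((k + 1) x)`, against `harmonic_false`. -/
theorem boundary_zero_false (hα : 0 < α) (hinj : Set.InjOn (intPoly A B C D E F) (coneSector α))
    (hnn : ∀ z ∈ coneSector α, 0 ≤ intPoly A B C D E F z)
    {s : ℝ} (hs : s = 0 ∨ s = α) : slopeForm A B C s ≠ 0 := by
  intro hz
  obtain ⟨M, hM, h⟩ := near_ray A B C D E F α
  have s0 : 0 ≤ s := by rcases hs with rfl | rfl <;> linarith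
  have sα : s ≤ α := by rcases hs with rfl | rfl <;> linarith
  -- `g k x` is the ordinate of the `k`-th lattice point of column `x`, counted from the ray inwards.
  obtain ⟨g, hg1, hg2, ginj⟩ : ∃ g : ℕ → ℕ → ℤ,
      (∀ k x : ℕ, |(g k x : ℝ) - s * x| ≤ k + 1) ∧
      (∀ k x : ℕ, (k : ℝ) ≤ α * x → 0 ≤ g k x ∧ (g k x : ℝ) ≤ α * x) ∧
      (∀ k k' x, g k x = g k' x → k = k') := by
    rcases hs with rfl | rfl
    · refine ⟨fun k _ => k, fun k x => ?_, fun k x hk => ⟨by simp, by simpa using hk⟩,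
        fun k k' x hkk => by simpa using hkk⟩
      have : (0 : ℝ) ≤ k := by positivity
      push_cast
      rw [zero_mul, sub_zero, abs_of_nonneg this]; linarith
    · refine ⟨fun k x => ⌊s * x⌋ - k, fun k x => ?_, fun k x hk => ⟨?_, ?_⟩,
        fun k k' x hkk => by simpa using hkk⟩
      · have f1 := Int.floor_le (s * x)
        have f2 := Int.lt_floor_add_one (s * x)
        have : (0 : ℝ) ≤ k := by positivity
        push_cast
        exact abs_le.2 ⟨by linarith, by linarith⟩
      · have : (k : ℤ) ≤ ⌊s * x⌋ := Int.le_floor.2 (by exact_mod_cast hk)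
        exact sub_nonneg.2 this
      · have f1 := Int.floor_le (s * x)
        have : (0 : ℝ) ≤ k := by positivity
        push_cast
        linarith
  refine harmonic_false hinj hnn M hM (fun k => max (k + 1) ⌈(k : ℝ) / α⌉₊)
    (fun k x => ((x : ℤ), g k x)) (fun k x hx => ?_) (fun k x hx => ?_) (fun k x k' x' e => ?_)
  · have := hg2 k x (by
      have : (k : ℝ) / α ≤ x := (Nat.le_ceil _).trans (by exact_mod_cast (le_max_right _ _).trans hx)
      rw [div_le_iff₀ hα] at this; linarith)
    exact ⟨this.1, by simpa using this.2⟩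
  · have h1 := h s (k + 1) x (g k x) s0 sα (by linarith [(k.cast_nonneg : (0 : ℝ) ≤ k)])
      (by exact_mod_cast (le_max_left _ _).trans hx) (hg1 k x)
    rw [hz, zero_mul, sub_zero] at h1
    have h2 := (abs_le.1 h1).2
    have h3 := intPoly_cast A B C D E F ((x : ℤ), g k x)
    push_cast at h3
    rw [← h3] at h2
    exact_mod_cast h2
  · simp only [Prod.mk.injEq, Nat.cast_inj] at e
    obtain ⟨rfl, e⟩ := e
    exact ⟨ginj _ _ _ e, rfl⟩

/-- A zero of a nonnegative form on an interior ray is a double zero. -/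
theorem interior_zero (hpos : ∀ s, 0 ≤ s → s ≤ α → 0 ≤ slopeForm A B C s)
    {s : ℝ} (s0 : 0 < s) (sα : s < α) (hz : slopeForm A B C s = 0) : B ^ 2 = A * C := by
  have hd : HasDerivAt (slopeForm A B C) ((B : ℝ) + C * s) s := by
    have h1 := ((hasDerivAt_id s).const_mul (B : ℝ)).const_add ((A : ℝ) / 2)
    have h2 := ((hasDerivAt_id s).pow 2).const_mul (C : ℝ)
    have h3 := h1.add (h2.div_const 2)
    refine h3.congr_deriv ?_
    simp; ring
  have hmin : IsLocalMin (slopeForm A B C) s := by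
    filter_upwards [Ioo_mem_nhds s0 sα] with u hu
    rw [hz]
    exact hpos u hu.1.le hu.2.le
  have h0 := hmin.hasDerivAt_eq_zero hd
  unfold slopeForm at hz
  have : (B : ℝ) ^ 2 = A * C := by
    have e1 : (B : ℝ) = -C * s := by linarith
    have e2 : (A : ℝ) = C * s ^ 2 := by
      rw [e1] at hz; linarith
    rw [e1, e2]; ring
  exact_mod_cast this

/-! ### Sublevel sets and their boundaries -/

/-- If the leading form is positive on the closed sector, the sublevel set of level `n²` lies in a box
of side `O(n)`. -/
theorem box_bound (hα : 0 < α) (hpos : ∀ s, 0 ≤ s → s ≤ α → 0 < slopeForm A B C s) :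
    ∃ L : ℕ, ∀ n : ℕ, 1 ≤ n → ∀ z ∈ coneSector α, intPoly A B C D E F z ≤ (n : ℤ) ^ 2 →
      (0 ≤ z.1 ∧ z.1 ≤ (L * n : ℕ)) ∧ (0 ≤ z.2 ∧ z.2 ≤ (L * n : ℕ)) := by
  obtain ⟨M, hM, h⟩ := near_ray A B C D E F α
  have hcont : Continuous (slopeForm A B C) := by unfold slopeForm; fun_prop
  obtain ⟨s₀, hs₀, hmin⟩ := isCompact_Icc.exists_isMinOn
    (Set.nonempty_Icc.2 hα.le) hcont.continuousOn
  set m := slopeForm A B C s₀ with hm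
  have m0 : 0 < m := hpos s₀ hs₀.1 hs₀.2
  set K : ℝ := (M + 1) / m + 1 with hK
  have K1 : 1 ≤ K := by have : 0 < (M + 1) / m := by positivity
                        linarith
  have mK : m * K = M + 1 + m := by rw [hK]; field_simp
  obtain ⟨L, hL⟩ := exists_nat_ge (max K (α * K))
  have hLK := (le_max_left _ _).trans hL
  have hLα := (le_max_right _ _).trans hL
  refine ⟨L, fun n hn z hz hzn => ?_⟩
  have n1 : (1 : ℝ) ≤ n := by exact_mod_cast hn
  have y0 : (0 : ℝ) ≤ z.2 := by exact_mod_cast hz.1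
  have x0' : (0 : ℝ) ≤ z.1 := by
    by_contra! hneg
    have := hz.2
    nlinarith
  have x0 : 0 ≤ z.1 := by exact_mod_cast x0'
  have xK : (z.1 : ℝ) ≤ K * n := by
    by_contra! hgt
    have x1 : (1 : ℝ) ≤ z.1 := by nlinarith
    have xpos : (0 : ℝ) < z.1 := by linarith
    have hs : (z.2 : ℝ) / z.1 ∈ Set.Icc 0 α :=
      ⟨by positivity, by rw [div_le_iff₀ xpos]; exact hz.2⟩
    have h1 := h (z.2 / z.1) 1 z.1 z.2 hs.1 hs.2 le_rfl x1 (by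
      rw [div_mul_cancel₀ _ xpos.ne']; simp)
    have h2 : m ≤ slopeForm A B C (z.2 / z.1) := hmin hs
    have h3 := (abs_le.1 h1).1
    rw [← intPoly_cast] at h3
    have h4 : (intPoly A B C D E F z : ℝ) ≤ (n : ℝ) ^ 2 := by exact_mod_cast hzn
    have h5 : m * (z.1 : ℝ) ^ 2 ≤ slopeForm A B C (z.2 / z.1) * (z.1 : ℝ) ^ 2 := by gcongr
    -- `x > K n` forces both `m x - M ≥ n` and `x > n`, hence `m x² - M x > n²`.
    have h6 : m * z.1 - M ≥ n := by
      have : m * (K * n) ≤ m * z.1 := by gcongr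
      have e : m * (K * n) = (M + 1 + m) * n := by rw [← mul_assoc, mK]
      nlinarith [(M.cast_nonneg : (0 : ℝ) ≤ M)]
    have h7 : (n : ℝ) < z.1 := by nlinarith
    nlinarith
  have xL : (z.1 : ℝ) ≤ L * n := xK.trans (by gcongr)
  have yL : (z.2 : ℝ) ≤ L * n := by
    have h1 : α * (z.1 : ℝ) ≤ α * (K * n) := by gcongr
    have h2 : α * K * n ≤ L * n := by gcongr
    have := hz.2
    linarith
  exact ⟨⟨x0, by exact_mod_cast xL⟩, ⟨hz.1, by exact_mod_cast yL⟩⟩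

/-- Each row contains at most one point of the sublevel set whose right neighbour leaves it. -/
theorem right_boundary_card (hα : 0 < α) {S : Finset (ℤ × ℤ)} {N : ℤ} {L : ℕ}
    (hS : ∀ z, z ∈ S ↔ z ∈ coneSector α ∧ intPoly A B C D E F z ≤ N)
    (hbox : ∀ z ∈ S, (0 ≤ z.1 ∧ z.1 ≤ (L : ℤ)) ∧ (0 ≤ z.2 ∧ z.2 ≤ (L : ℤ))) :
    (S.filter fun z => z + (1, 0) ∉ S).card ≤ L + 1 := by
  have := Finset.card_le_card_of_injOn (s := S.filter fun z => z + (1, 0) ∉ S)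
    (t := Finset.Icc (0 : ℤ) L) (fun z => z.2) ?_ ?_
  · simpa using this
  · intro z hz
    simp only [Finset.coe_filter, Set.mem_ofPred_eq] at hz
    have := (hbox z hz.1).2
    simpa using this
  · have cross : ∀ x y : ℤ, ((x, y) ∈ S ∧ (x, y) + (1, 0) ∉ S) →
        quadPoly A B C D E F x y ≤ N ∧ (N : ℝ) < quadPoly A B C D E F (x + 1) y := by
      intro x y ⟨h1, h2⟩
      have h1' := (hS _).1 h1
      have h3 : (x, y) + ((1, 0) : ℤ × ℤ) ∈ coneSector α := by
        refine ⟨by simpa using h1'.1.1, ?_⟩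
        have := h1'.1.2
        push_cast [Prod.mk_add_mk] at this ⊢
        simp only [add_zero]
        nlinarith
      have h4 : N < intPoly A B C D E F ((x, y) + (1, 0)) := by
        by_contra! hle
        exact h2 ((hS _).2 ⟨h3, hle⟩)
      have h5 : (intPoly A B C D E F (x, y) : ℝ) ≤ N := by exact_mod_cast h1'.2
      have h6 : (N : ℝ) < intPoly A B C D E F ((x, y) + (1, 0)) := by exact_mod_cast h4
      rw [intPoly_cast] at h5 h6
      refine ⟨h5, ?_⟩
      simpa using h6
    rintro ⟨x, y⟩ hz ⟨x', y'⟩ hz' e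
    simp only [Finset.coe_filter, Set.mem_ofPred_eq] at hz hz' e
    subst e
    obtain ⟨a1, a2⟩ := cross _ _ hz
    obtain ⟨a3, a4⟩ := cross _ _ hz'
    have := crossing_unique (h := fun x => quadPoly A B C D E F x y) (a := A / 2)
      (b := -A / 2 + B * y + D) (c := C * (y * (y - 1) / 2) + E * y + F) (N := N)
      (fun x => by simp only [quadPoly]; ring) a1 a2 a3 a4
    rw [this]

/-- Each column contains at most two points of the sublevel set whose upper neighbour leaves it: one
below the ray `y = α x` and one where the polynomial crosses the level `N`. -/
theorem upper_boundary_card {S : Finset (ℤ × ℤ)} {N : ℤ} {L : ℕ}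
    (hS : ∀ z, z ∈ S ↔ z ∈ coneSector α ∧ intPoly A B C D E F z ≤ N)
    (hbox : ∀ z ∈ S, (0 ≤ z.1 ∧ z.1 ≤ (L : ℤ)) ∧ (0 ≤ z.2 ∧ z.2 ≤ (L : ℤ))) :
    (S.filter fun z => z + (0, 1) ∉ S).card ≤ 2 * (L + 1) := by
  classical
  set U := S.filter fun z => z + (0, 1) ∉ S with hU
  have inS : ∀ x y, (x, y) ∈ U → (x, y) ∈ S := fun x y h => (Finset.mem_filter.1 h).1
  have toIcc : ∀ V : Finset (ℤ × ℤ), V ⊆ U → Set.InjOn Prod.fst (V : Set (ℤ × ℤ)) →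
      V.card ≤ L + 1 := by
    intro V hV hinj
    have := Finset.card_le_card_of_injOn (t := Finset.Icc (0 : ℤ) L) Prod.fst
      (fun z hz => by
        have := (hbox z (inS _ _ (hV hz))).1
        simpa using this) hinj
    simpa using this
  -- Either the polynomial crosses the level `N`, or the step leaves the sector.
  rw [← Finset.card_filter_add_card_filter_not (s := U) fun z => z + (0, 1) ∈ coneSector α, two_mul]
  refine add_le_add (toIcc _ (Finset.filter_subset _ _) ?_) (toIcc _ (Finset.filter_subset _ _) ?_)
  · have cross : ∀ x y : ℤ, (x, y) ∈ U → (x, y) + (0, 1) ∈ coneSector α →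
        quadPoly A B C D E F x y ≤ N ∧ (N : ℝ) < quadPoly A B C D E F x (y + 1) := by
      intro x y h1 h3
      have h2 := (Finset.mem_filter.1 h1).2
      have h1' := (hS _).1 (inS _ _ h1)
      have h4 : N < intPoly A B C D E F ((x, y) + (0, 1)) := by
        by_contra! hle
        exact h2 ((hS _).2 ⟨h3, hle⟩)
      have h5 : (intPoly A B C D E F (x, y) : ℝ) ≤ N := by exact_mod_cast h1'.2
      have h6 : (N : ℝ) < intPoly A B C D E F ((x, y) + (0, 1)) := by exact_mod_cast h4
      rw [intPoly_cast] at h5 h6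
      refine ⟨h5, ?_⟩
      simpa using h6
    rintro ⟨x, y⟩ hz ⟨x', y'⟩ hz' e
    simp only [Finset.coe_filter, Set.mem_ofPred_eq] at hz hz' e
    subst e
    obtain ⟨a1, a2⟩ := cross _ _ hz.1 hz.2
    obtain ⟨a3, a4⟩ := cross _ _ hz'.1 hz'.2
    have := crossing_unique (h := fun y => quadPoly A B C D E F x y) (a := C / 2)
      (b := -C / 2 + B * x + E) (c := A * (x * (x - 1) / 2) + D * x + F) (N := N)
      (fun x => by simp only [quadPoly]; ring) a1 a2 a3 a4
    rw [this]
  · have top : ∀ x y : ℤ, (x, y) ∈ U → (x, y) + (0, 1) ∉ coneSector α → y = ⌊α * x⌋ := by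
      intro x y h1 h3
      have h1' := ((hS _).1 (inS _ _ h1)).1
      have h4 : ¬ ((y + 1 : ℝ) ≤ α * x) := fun hle => h3 ⟨by
        have := h1'.1
        simp only [Prod.snd_add] at this ⊢
        omega, by simpa using hle⟩
      exact (Int.floor_eq_iff.2 ⟨h1'.2, not_le.1 h4⟩).symm
    rintro ⟨x, y⟩ hz ⟨x', y'⟩ hz' e
    simp only [Finset.coe_filter, Set.mem_ofPred_eq] at hz hz' e
    subst e
    rw [top _ _ hz.1 hz.2, top _ _ hz'.1 hz'.2]

end

/-! ### Fibres modulo a prime -/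

/-- The polynomial over `ZMod p`, where `/ 2` is field division; meaningful for odd `p`. -/
def modPoly {p : ℕ} [Fact p.Prime] (A B C D E F : ℤ) (v : ZMod p × ZMod p) : ZMod p :=
  A * (v.1 * (v.1 - 1) / 2) + B * (v.1 * v.2) + C * (v.2 * (v.2 - 1) / 2)
    + D * v.1 + E * v.2 + F

theorem intPoly_mod {p : ℕ} [Fact p.Prime] (h2 : (2 : ZMod p) ≠ 0) (A B C D E F : ℤ) (z : ℤ × ℤ) :
    ((intPoly A B C D E F z : ℤ) : ZMod p)
      = modPoly A B C D E F ((z.1 : ZMod p), (z.2 : ZMod p)) := by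
  have h : ∀ x : ℤ, ((x * (x - 1) / 2 : ℤ) : ZMod p) = (x : ZMod p) * (x - 1) / 2 := by
    intro x
    have : ((2 * (x * (x - 1) / 2) : ℤ) : ZMod p) = ((x * (x - 1) : ℤ) : ZMod p) := by
      rw [two_mul_half]
    push_cast only [Int.cast_mul, Int.cast_sub, Int.cast_ofNat, Int.cast_one] at this
    rw [eq_div_iff h2, mul_comm, this]
  simp only [intPoly, modPoly, Int.cast_add, Int.cast_mul, h]

/-- When the discriminant is invertible modulo an odd prime, reflection in the critical point permutes
every fibre of the polynomial and fixes only that point, so the fibres over noncritical values, of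
which there is at least one, have even size. -/
theorem exists_even_fiber {p : ℕ} [Fact p.Prime] (h2 : (2 : ZMod p) ≠ 0) (A B C D E F : ℤ)
    (hΔ : ((A * C - B ^ 2 : ℤ) : ZMod p) ≠ 0) :
    ∃ c : ZMod p, Even (Finset.univ.filter fun v => modPoly A B C D E F v = c).card := by
  push_cast at hΔ
  -- `(x₀, y₀)` is the critical point of the polynomial.
  set δ : ZMod p := A * C - B ^ 2 with hδ
  set u : ZMod p := A / 2 - D
  set w : ZMod p := C / 2 - E
  set x₀ : ZMod p := (u * C - B * w) / δ with hx₀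
  set y₀ : ZMod p := (A * w - B * u) / δ with hy₀
  have g1 : A * x₀ + B * y₀ = u := by rw [hx₀, hy₀]; field_simp; rw [hδ]; ring
  have g2 : B * x₀ + C * y₀ = w := by rw [hx₀, hy₀]; field_simp; rw [hδ]; ring
  -- The polynomial is invariant under the point reflection in `(x₀, y₀)`.
  have hsymm : ∀ v, modPoly A B C D E F (2 * x₀ - v.1, 2 * y₀ - v.2) = modPoly A B C D E F v := by
    intro v
    simp only [u, w] at g1 g2
    have hh : (2 : ZMod p) * (1 / 2) = 1 := by field_simp
    simp only [modPoly]
    field_simp at g1 g2 ⊢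
    linear_combination (2 * (x₀ - v.1)) * g1 + (2 * (y₀ - v.2)) * g2
  refine ⟨modPoly A B C D E F (x₀, y₀) + 1, ?_⟩
  rw [← ZMod.natCast_eq_zero_iff_even, Finset.card_eq_sum_ones, Nat.cast_sum]
  refine Finset.sum_involution (fun v _ => (2 * x₀ - v.1, 2 * y₀ - v.2))
    (fun _ _ => by decide) (fun v hv _ hfix => ?_) (fun v hv => ?_) (fun v hv => ?_)
  · simp only [Prod.ext_iff] at hfix
    have e1 : v.1 = x₀ := mul_left_cancel₀ h2 (by linear_combination -hfix.1)
    have e2 : v.2 = y₀ := mul_left_cancel₀ h2 (by linear_combination -hfix.2)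
    have hv' : v = (x₀, y₀) := Prod.ext e1 e2
    rw [Finset.mem_filter, hv'] at hv
    simpa using hv.2
  · simp only [Finset.mem_filter, Finset.mem_univ, true_and] at hv ⊢
    rw [hsymm, hv]
  · ext <;> simp

/-! ### The discriminant -/

theorem disc_zero_of_packing {A B C D E F : ℤ} {α : ℝ} (hα : 0 < α)
    (hinj : Set.InjOn (intPoly A B C D E F) (coneSector α))
    (hnn : ∀ z ∈ coneSector α, 0 ≤ intPoly A B C D E F z)
    (hsurj : ∀ k : ℕ, ∃ z ∈ coneSector α, intPoly A B C D E F z = k) : B ^ 2 = A * C := by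
  classical
  by_contra hΔ
  have hq : ∀ s, 0 ≤ s → s ≤ α → 0 ≤ slopeForm A B C s := fun s => slopeForm_nonneg hnn
  have hpos : ∀ s, 0 ≤ s → s ≤ α → 0 < slopeForm A B C s := by
    intro s s0 sα
    refine lt_of_le_of_ne (hq s s0 sα) fun hz => ?_
    rcases s0.eq_or_lt with h0 | h0
    · exact boundary_zero_false hα hinj hnn (Or.inl h0.symm) hz.symm
    rcases sα.eq_or_lt with h1 | h1
    · exact boundary_zero_false hα hinj hnn (Or.inr h1) hz.symm
    exact hΔ (interior_zero hq h0 h1 hz.symm)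
  obtain ⟨L, hL⟩ := box_bound (D := D) (E := E) (F := F) hα hpos
  choose ζ hζT hζ using hsurj
  obtain ⟨p, hp, hprime⟩ := Nat.exists_infinite_primes ((A * C - B ^ 2).natAbs + 3)
  have : Fact p.Prime := ⟨hprime⟩
  have h2 : (2 : ZMod p) ≠ 0 := by
    intro h
    have h' : ((2 : ℕ) : ZMod p) = 0 := by exact_mod_cast h
    rw [ZMod.natCast_eq_zero_iff] at h'
    have := Nat.le_of_dvd (by norm_num) h'
    omega
  have hΔp : ((A * C - B ^ 2 : ℤ) : ZMod p) ≠ 0 := by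
    intro h
    rw [ZMod.intCast_zmod_eq_zero_iff_dvd] at h
    have h1 : A * C - B ^ 2 ≠ 0 := fun h => hΔ (by linarith)
    have := Int.natAbs_le_of_dvd_ne_zero h h1
    simp only [Int.natAbs_natCast] at this
    omega
  obtain ⟨c, hc⟩ := exists_even_fiber h2 A B C D E F hΔp
  set Z := (Finset.univ.filter fun v : ZMod p × ZMod p => modPoly A B C D E F v = c).card with hZ
  have hodd : Odd p := hprime.odd_of_ne_two (by omega)
  have hZp : (1 : ℝ) ≤ |(Z : ℝ) - p| := by
    have : (Z : ℤ) - p ≠ 0 := by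
      intro h
      have : Z = p := by omega
      rw [this] at hc
      exact (Nat.not_even_iff_odd.2 hodd) hc
    exact_mod_cast Int.one_le_abs this
  have est : ∀ n : ℕ, 1 ≤ n →
      ((n : ℝ) ^ 2 + 1) ≤ p ^ 2 * (2 * p * (2 * (L * n + 1))) + p * p := by
    intro n hn
    have ζinj : Function.Injective ζ := fun a b h => by
      have := hζ a
      rw [h, hζ b] at this
      exact_mod_cast this.symm
    set S := (Finset.range (n ^ 2 + 1)).image ζ with hSdef
    have hcard : S.card = n ^ 2 + 1 := by
      rw [hSdef, Finset.card_image_of_injective _ ζinj, Finset.card_range]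
    have hS : ∀ z, z ∈ S ↔ z ∈ coneSector α ∧ intPoly A B C D E F z ≤ (n : ℤ) ^ 2 := by
      intro z
      simp only [hSdef, Finset.mem_image, Finset.mem_range]
      constructor
      · rintro ⟨k, hk, rfl⟩
        refine ⟨hζT k, ?_⟩
        rw [hζ]
        exact_mod_cast (by omega : k ≤ n ^ 2)
      · rintro ⟨hz, hzn⟩
        have h0 := hnn z hz
        refine ⟨(intPoly A B C D E F z).toNat, ?_, hinj (hζT _) hz ?_⟩
        · zify; omega
        · rw [hζ]; omega
    have hbox := fun z hz => hL n hn z ((hS z).1 hz).1 ((hS z).1 hz).2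
    have hr := right_boundary_card hα hS hbox
    have hu := upper_boundary_card hS hbox
    have key := residue_average p S (2 * (L * n + 1)) (by positivity)
      (by exact_mod_cast hr.trans (by omega)) (by exact_mod_cast hu)
      (fun v => if modPoly A B C D E F v = c then 1 else 0)
      (fun v => by split_ifs <;> norm_num) (fun v => by split_ifs <;> norm_num)
    have e1 : ∑ v : ZMod p × ZMod p, (if modPoly A B C D E F v = c then (1 : ℝ) else 0) = Z := by
      rw [Finset.sum_boole]
    have e2 : ∑ z ∈ S, (if modPoly A B C D E F ((z.1 : ZMod p), (z.2 : ZMod p)) = c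
          then (1 : ℝ) else 0)
        = ∑ k ∈ Finset.range (n ^ 2 + 1), (if (k : ZMod p) = c then (1 : ℝ) else 0) := by
      rw [hSdef, Finset.sum_image fun a _ b _ h => ζinj h]
      refine Finset.sum_congr rfl fun k _ => ?_
      rw [← intPoly_mod h2, hζ]
      simp
    rw [e1, e2, hcard] at key
    have cnt := count_residue p c (n ^ 2 + 1)
    set t := ∑ k ∈ Finset.range (n ^ 2 + 1), (if (k : ZMod p) = c then (1 : ℝ) else 0)
    push_cast at key cnt
    have h3 : ((n : ℝ) ^ 2 + 1) * |(Z : ℝ) - p| ≤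
        |((n : ℝ) ^ 2 + 1) * Z - p ^ 2 * t| + p * |((n : ℝ) ^ 2 + 1) - p * t| := by
      rw [← abs_of_pos (by positivity : (0 : ℝ) < (n : ℝ) ^ 2 + 1), ← abs_mul]
      nth_rw 3 [← abs_of_nonneg (by positivity : (0 : ℝ) ≤ (p : ℝ))]
      rw [← abs_mul, abs_of_pos (by positivity : (0 : ℝ) < (n : ℝ) ^ 2 + 1)]
      refine le_trans (le_of_eq ?_) (abs_sub _ _)
      congr 1; ring
    have h4 : (p : ℝ) * |((n : ℝ) ^ 2 + 1) - p * t| ≤ p * p := by gcongr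
    have h5 : ((n : ℝ) ^ 2 + 1) * 1 ≤ ((n : ℝ) ^ 2 + 1) * |(Z : ℝ) - p| := by gcongr
    linarith
  -- The estimate bounds `n²` linearly in `n`; this `m` violates it.
  set m : ℕ := 4 * p ^ 3 * (L + 1) + p * p + 1 with hm
  have h := est m (by omega)
  have hm' : (m : ℝ) = 4 * p ^ 3 * (L + 1) + p * p + 1 := by rw [hm]; push_cast; ring
  have m1 : (1 : ℝ) ≤ m := by exact_mod_cast (by omega : 1 ≤ m)
  have h6 : (m : ℝ) ^ 2 = 4 * p ^ 3 * L * m + (4 * p ^ 3 + p * p + 1) * m := by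
    rw [sq]; nth_rw 1 [hm']; ring
  have h7 : (4 * (p : ℝ) ^ 3 + p * p + 1) * 1 ≤ (4 * p ^ 3 + p * p + 1) * m := by gcongr
  nlinarith


/-- If `P(x,y) = A·x(x−1)/2 + B·xy + C·y(y−1)/2 + D·x + E·y + F` with integer
coefficients is a quadratic packing polynomial on `S(α)`, then its discriminant
vanishes: `B² = AC`. -/
theorem packing_polynomial_discriminant_zero
    (α : ℝ) (hα : 0 < α)
    (A B C D E F : ℤ) (hABC : ¬(A = 0 ∧ B = 0 ∧ C = 0))
    (P : ℝ → ℝ → ℝ)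
    (hP : ∀ x y : ℝ, P x y =
      (A : ℝ) * (x * (x - 1) / 2) + (B : ℝ) * (x * y) + (C : ℝ) * (y * (y - 1) / 2)
        + (D : ℝ) * x + (E : ℝ) * y + (F : ℝ))
    (hpack : Set.BijOn (fun z : ℝ × ℝ => P z.1 z.2)
        {z : ℝ × ℝ | (0 ≤ z.2 ∧ z.2 ≤ α * z.1) ∧ ∃ m n : ℤ, z.1 = m ∧ z.2 = n}
        {x : ℝ | ∃ k : ℕ, x = k}) :
    B ^ 2 = A * C := by
  have hcast : ∀ z : ℤ × ℤ, P z.1 z.2 = intPoly A B C D E F z := by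
    intro z
    rw [hP, intPoly_cast, quadPoly]
  have hmem : ∀ z ∈ coneSector α, ((z.1 : ℝ), (z.2 : ℝ)) ∈
      {z : ℝ × ℝ | (0 ≤ z.2 ∧ z.2 ≤ α * z.1) ∧ ∃ m n : ℤ, z.1 = m ∧ z.2 = n} :=
    fun z hz => ⟨⟨Int.cast_nonneg hz.1, hz.2⟩, z.1, z.2, rfl, rfl⟩
  refine disc_zero_of_packing (D := D) (E := E) (F := F) hα (fun z hz z' hz' e => ?_)
    (fun z hz => ?_) (fun k => ?_)
  · have := hpack.injOn (hmem z hz) (hmem z' hz') (by simp only [hcast, e])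
    simp only [Prod.mk.injEq, Int.cast_inj] at this
    exact Prod.ext this.1 this.2
  · obtain ⟨k, hk⟩ := hpack.mapsTo (hmem z hz)
    simp only [hcast] at hk
    have : intPoly A B C D E F z = k := by exact_mod_cast hk
    omega
  · obtain ⟨⟨x, y⟩, ⟨⟨h0, h1⟩, m, n, hx, hy⟩, hk⟩ := hpack.surjOn ⟨k, rfl⟩
    simp only at h0 h1 hx hy hk
    subst hx hy
    refine ⟨(m, n), ⟨by exact_mod_cast h0, h1⟩, ?_⟩
    have := hcast (m, n)
    simp only [hk] at this
    exact_mod_cast this.symm
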